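/- Let n ≥ 3 be an integer and let 𝒯 be a triangle family with |𝒯| = C(n,3) and λ(𝒯) > n − 1. Then λ(𝒯) = n, the support graph Γ₀(𝒯) is a complete graph on exactly n vertices, and 𝒯 consists of all 3-element subsets of the vertex set of Γ₀(𝒯). -/

import Mathlib

open Finset Matrix

/-- The sign `[T : e]` of an edge `e` in a triangle `T`. -/
noncomputable def triSign (T e : Finset ℕ) : ℝ :=
  if e ⊆ T ∧ e.card = 2 ∧ T.card = 3 then
    if (T \ e).max = T.max ∨ (T \ e).min = T.min then 1 else -1
  else 0

/-- A triangle family: a nonempty finite set of 3-element subsets of ℕ. -/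
def IsTriFam (F : Finset (Finset ℕ)) : Prop :=
  F.Nonempty ∧ ∀ T ∈ F, T.card = 3

/-- The edges of the support graph of a triangle family. -/
def edgesOf (F : Finset (Finset ℕ)) : Finset (Finset ℕ) :=
  F.biUnion fun T => T.powersetCard 2

/-- The vertices of the support graph of a triangle family. -/
def vertsOf (F : Finset (Finset ℕ)) : Finset ℕ :=
  F.biUnion id

/-- The signed edge-triangle incidence matrix of a triangle family. -/
noncomputable def delta1 (F : Finset (Finset ℕ)) :
    Matrix {T // T ∈ F} {e // e ∈ edgesOf F} ℝ :=
  Matrix.of fun T e => triSign T.1 e.1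

/-- The smallest positive eigenvalue of a matrix. -/
noncomputable def lambdaMinPos {m : Type*} [Fintype m] (M : Matrix m m ℝ) : ℝ :=
  sInf {μ : ℝ | 0 < μ ∧ ∃ v : m → ℝ, v ≠ 0 ∧ M.mulVec v = μ • v}

/-- `λ(𝒯)`: the smallest positive eigenvalue of `δ₁(𝒯)ᵀ δ₁(𝒯)`. -/
noncomputable def lam (F : Finset (Finset ℕ)) : ℝ :=
  lambdaMinPos ((delta1 F)ᵀ * delta1 F)

/-- The neighborhood of `x` in the support graph `Γ₀(F)`. -/
def nbrs (F : Finset (Finset ℕ)) (x : ℕ) : Finset ℕ :=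
  (vertsOf F).filter fun y => x ≠ y ∧ ∃ T ∈ F, x ∈ T ∧ y ∈ T

/-- `φ(t)`: the maximum of `λ(𝒯)` over triangle families with `|𝒯| = t`. -/
noncomputable def phi (t : ℕ) : ℝ :=
  sSup {r : ℝ | ∃ F : Finset (Finset ℕ), IsTriFam F ∧ F.card = t ∧ lam F = r}

/-- `Λ(t) = max_{1 ≤ s ≤ t} φ(s)`. -/
noncomputable def Lam (t : ℕ) : ℝ :=
  sSup {r : ℝ | ∃ s : ℕ, 1 ≤ s ∧ s ≤ t ∧ phi s = r}

/-- `H(n) = min{ s ≥ 1 : φ(C(n,3)+s) > n - 1 }`. -/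
noncomputable def Hfun (n : ℕ) : ℕ :=
  sInf {s : ℕ | 1 ≤ s ∧ (n : ℝ) - 1 < phi (n.choose 3 + s)}

/-- The triangle family `𝒯_{c,b}`: all 3-cliques of `K_c ∨ (b isolated vertices)`. -/
def Tcb (c b : ℕ) : Finset (Finset ℕ) :=
  ((Finset.Icc 1 c).powersetCard 3) ∪
    (Finset.Icc (c+1) (c+b)).biUnion
      (fun i => ((Finset.Icc 1 c).powersetCard 2).image (fun p => insert i p))

/-!
The `(e, e)` entry of the positive semidefinite matrix `M * M - λ • M`, with `M = δ₁ᵀ δ₁`, shows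
that an edge in `d` triangles satisfies `λ ≤ d + 2`: the diagonal entry of `M` is `d`, and each of
these triangles contributes two further entries `±1` to the row of `e`. Hence `λ > n - 1` puts every
edge in at least `n - 2` triangles. Double counting down the iterated shadows then forces at least
`C(n, 3)` triangles, with equality only for all the triples of an `n`-set.

On alternating cochains of the complete complex on a vertex set `V`, the eigenvalue equation reads
`#V * a x y + D y - D x = μ * a x y`, where `D x = ∑ z ∈ V, a x z`. Summing over `y` gives
`μ * D x = 0`, so `D = 0` and `μ = #V` as soon as `μ ≠ 0`.
-/

open scoped FinsetFamily

section SetFamilies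

variable {α : Type*} [DecidableEq α] {𝒜 ℬ : Finset (Finset α)} {s : Finset α} {k r : ℕ}

/-- The vertices of the link of `s` in the family `𝒜`: those `z ∉ s` for which `s ∪ {z}` belongs
to `𝒜`. When `𝒜` is `(r + 1)`-uniform and `#s = r`, their number is the codegree of `s`. -/
def linkVerts (𝒜 : Finset (Finset α)) (s : Finset α) : Finset α :=
  {z ∈ 𝒜.biUnion id | z ∉ s ∧ insert z s ∈ 𝒜}

lemma mem_linkVerts {z : α} : z ∈ linkVerts 𝒜 s ↔ z ∉ s ∧ insert z s ∈ 𝒜 := by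
  simp only [linkVerts, mem_filter, mem_biUnion, id_eq, and_iff_right_iff_imp]
  exact fun h => ⟨_, h.2, mem_insert_self z s⟩

lemma image_insert_linkVerts (h𝒜 : (𝒜 : Set (Finset α)).Sized (#s + 1)) :
    (linkVerts 𝒜 s).image (insert · s) = {t ∈ 𝒜 | s ⊆ t} := by
  ext t
  simp only [mem_image, mem_linkVerts, mem_filter]
  constructor
  · rintro ⟨z, ⟨-, hz⟩, rfl⟩
    exact ⟨hz, subset_insert z s⟩
  · rintro ⟨ht, hst⟩
    obtain ⟨z, hz, rfl⟩ := exists_eq_insert_iff.2 ⟨hst, (h𝒜 ht).symm⟩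
    exact ⟨z, ⟨hz, ht⟩, rfl⟩

lemma sum_filter_superset_eq_sum_linkVerts {M : Type*} [AddCommMonoid M]
    (h𝒜 : (𝒜 : Set (Finset α)).Sized (#s + 1)) (g : Finset α → M) :
    ∑ t ∈ 𝒜 with s ⊆ t, g t = ∑ z ∈ linkVerts 𝒜 s, g (insert z s) := by
  rw [← image_insert_linkVerts h𝒜, sum_image]
  intro a ha b _ hab
  exact (insert_inj (mem_linkVerts.1 ha).1).1 hab

lemma card_filter_superset_eq_card_linkVerts (h𝒜 : (𝒜 : Set (Finset α)).Sized (#s + 1)) :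
    #{t ∈ 𝒜 | s ⊆ t} = #(linkVerts 𝒜 s) := by
  simpa only [card_eq_sum_ones] using sum_filter_superset_eq_sum_linkVerts h𝒜 fun _ => 1

lemma filter_subset_shadow (h𝒜 : (𝒜 : Set (Finset α)).Sized (r + 1)) {t : Finset α} (ht : t ∈ 𝒜) :
    {f ∈ ∂ 𝒜 | f ⊆ t} = t.powersetCard r := by
  ext f
  simp only [mem_filter, mem_powersetCard]
  constructor
  · exact fun ⟨hf, hft⟩ => ⟨hft, h𝒜.shadow hf⟩
  · exact fun ⟨hft, hf⟩ =>
      ⟨mem_shadow_iff_exists_mem_card_add_one.2 ⟨t, ht, hft, by rw [h𝒜 ht, hf]⟩, hft⟩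

lemma sum_shadow_card_filter_superset (h𝒜 : (𝒜 : Set (Finset α)).Sized (r + 1)) (hℬ : ℬ ⊆ 𝒜) :
    ∑ f ∈ ∂ 𝒜, #{t ∈ ℬ | f ⊆ t} = (r + 1) * #ℬ := by
  calc ∑ f ∈ ∂ 𝒜, #{t ∈ ℬ | f ⊆ t}
      = ∑ t ∈ ℬ, #{f ∈ ∂ 𝒜 | f ⊆ t} :=
        sum_card_bipartiteAbove_eq_sum_card_bipartiteBelow fun f t : Finset α => f ⊆ t
    _ = ∑ t ∈ ℬ, (r + 1) := sum_congr rfl fun t ht => by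
        rw [filter_subset_shadow h𝒜 (hℬ ht), card_powersetCard, h𝒜 (hℬ ht),
          Nat.choose_succ_self_right]
    _ = (r + 1) * #ℬ := by rw [sum_const, smul_eq_mul, mul_comm]

lemma card_shadow_mul_le (h𝒜 : (𝒜 : Set (Finset α)).Sized (r + 1))
    (hk : ∀ s ∈ ∂ 𝒜, k ≤ #(linkVerts 𝒜 s)) : #(∂ 𝒜) * k ≤ (r + 1) * #𝒜 := by
  rw [← sum_shadow_card_filter_superset h𝒜 Subset.rfl, ← smul_eq_mul]
  refine card_nsmul_le_sum _ _ _ fun s hs => ?_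
  have h𝒜s : (𝒜 : Set (Finset α)).Sized (#s + 1) := by rwa [h𝒜.shadow hs]
  exact (hk s hs).trans_eq (card_filter_superset_eq_card_linkVerts h𝒜s).symm

lemma succ_le_card_linkVerts_shadow (hk : ∀ s ∈ ∂ 𝒜, k ≤ #(linkVerts 𝒜 s)) :
    ∀ t ∈ ∂ (∂ 𝒜), k + 1 ≤ #(linkVerts (∂ 𝒜) t) := by
  intro t ht
  obtain ⟨b, hbt, hb⟩ := mem_shadow_iff_insert_mem.1 ht
  have hb_not_mem : b ∉ linkVerts 𝒜 (insert b t) := fun h =>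
    (mem_linkVerts.1 h).1 (mem_insert_self b t)
  have hsub : insert b (linkVerts 𝒜 (insert b t)) ⊆ linkVerts (∂ 𝒜) t := by
    refine insert_subset (mem_linkVerts.2 ⟨hbt, hb⟩) fun z hz => ?_
    obtain ⟨hz, hz𝒜⟩ := mem_linkVerts.1 hz
    rw [mem_insert, not_or] at hz
    refine mem_linkVerts.2 ⟨hz.2, mem_shadow_iff_insert_mem.2 ⟨b, ?_, ?_⟩⟩
    · simpa only [mem_insert, not_or] using ⟨Ne.symm hz.1, hbt⟩
    · rwa [insert_comm]
  calc k + 1 ≤ #(linkVerts 𝒜 (insert b t)) + 1 := by gcongr; exact hk _ hb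
    _ = #(insert b (linkVerts 𝒜 (insert b t))) := (card_insert_of_notMem hb_not_mem).symm
    _ ≤ #(linkVerts (∂ 𝒜) t) := card_le_card hsub

lemma biUnion_shadow (h𝒜 : (𝒜 : Set (Finset α)).Sized (r + 2)) :
    (∂ 𝒜).biUnion id = 𝒜.biUnion id := by
  ext x
  simp only [mem_biUnion, id_eq]
  constructor
  · rintro ⟨s, hs, hx⟩
    obtain ⟨t, ht, hst⟩ := exists_subset_of_mem_shadow hs
    exact ⟨t, ht, hst hx⟩
  · rintro ⟨t, ht, hx⟩
    obtain ⟨y, hy, hyx⟩ := exists_mem_ne (by rw [h𝒜 ht]; omega : 1 < #t) x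
    exact ⟨t.erase y, erase_mem_shadow ht hy, mem_erase.2 ⟨hyx.symm, hx⟩⟩

lemma card_biUnion_mul_ascFactorial_le (h𝒜 : (𝒜 : Set (Finset α)).Sized (r + 1))
    (hk : ∀ s ∈ ∂ 𝒜, k ≤ #(linkVerts 𝒜 s)) :
    #(𝒜.biUnion id) * k.ascFactorial r ≤ (r + 1).factorial * #𝒜 := by
  induction r generalizing 𝒜 k with
  | zero =>
    have hle : #(𝒜.biUnion id) ≤ #𝒜 * 1 := card_biUnion_le_card_mul _ _ _ fun t ht => (h𝒜 ht).le
    simpa using hle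
  | succ r ih =>
    have ih_shadow := ih h𝒜.shadow (succ_le_card_linkVerts_shadow hk)
    rw [biUnion_shadow h𝒜] at ih_shadow
    calc #(𝒜.biUnion id) * k.ascFactorial (r + 1)
        = #(𝒜.biUnion id) * (k + 1).ascFactorial r * k := by
          rw [Nat.ascFactorial_succ, ← Nat.succ_ascFactorial]; ring
      _ ≤ (r + 1).factorial * #(∂ 𝒜) * k := by gcongr
      _ = (r + 1).factorial * (#(∂ 𝒜) * k) := by ring
      _ ≤ (r + 1).factorial * ((r + 2) * #𝒜) := Nat.mul_le_mul_left _ (card_shadow_mul_le h𝒜 hk)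
      _ = (r + 2).factorial * #𝒜 := by rw [Nat.factorial_succ (r + 1)]; ring

lemma add_le_card_biUnion (h𝒜 : (𝒜 : Set (Finset α)).Sized (r + 1)) (hne : 𝒜.Nonempty)
    (hk : ∀ s ∈ ∂ 𝒜, k ≤ #(linkVerts 𝒜 s)) : k + r ≤ #(𝒜.biUnion id) := by
  obtain ⟨t, ht⟩ := hne
  obtain ⟨a, ha⟩ := card_pos.1 (by rw [h𝒜 ht]; omega : 0 < #t)
  have hs : t.erase a ∈ ∂ 𝒜 := erase_mem_shadow ht ha
  have hdisj : Disjoint (linkVerts 𝒜 (t.erase a)) (t.erase a) :=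
    disjoint_left.2 fun z hz => (mem_linkVerts.1 hz).1
  calc k + r ≤ #(linkVerts 𝒜 (t.erase a)) + #(t.erase a) := by
        gcongr
        · exact hk _ hs
        · exact (h𝒜.shadow hs).ge
    _ = #(linkVerts 𝒜 (t.erase a) ∪ t.erase a) := (card_union_of_disjoint hdisj).symm
    _ ≤ #(𝒜.biUnion id) := card_le_card <| union_subset (filter_subset _ _)
        ((erase_subset a t).trans (subset_biUnion_of_mem id ht))

lemma add_mul_ascFactorial (k r : ℕ) :
    (k + r) * k.ascFactorial r = (r + 1).factorial * (k + r).choose (r + 1) := by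
  rw [← Nat.ascFactorial_succ, Nat.ascFactorial_eq_factorial_mul_choose', Nat.add_succ_sub_one]

lemma choose_le_card (h𝒜 : (𝒜 : Set (Finset α)).Sized (r + 1)) (hne : 𝒜.Nonempty)
    (hk : ∀ s ∈ ∂ 𝒜, k ≤ #(linkVerts 𝒜 s)) : (k + r).choose (r + 1) ≤ #𝒜 := by
  refine Nat.le_of_mul_le_mul_left ?_ (r + 1).factorial_pos
  calc (r + 1).factorial * (k + r).choose (r + 1)
      = (k + r) * k.ascFactorial r := (add_mul_ascFactorial k r).symm
    _ ≤ #(𝒜.biUnion id) * k.ascFactorial r :=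
        Nat.mul_le_mul_right _ (add_le_card_biUnion h𝒜 hne hk)
    _ ≤ (r + 1).factorial * #𝒜 := card_biUnion_mul_ascFactorial_le h𝒜 hk

lemma card_biUnion_eq_of_card_le_choose (h𝒜 : (𝒜 : Set (Finset α)).Sized (r + 1))
    (hne : 𝒜.Nonempty) (hk : ∀ s ∈ ∂ 𝒜, k ≤ #(linkVerts 𝒜 s))
    (hcard : #𝒜 ≤ (k + r).choose (r + 1)) : #(𝒜.biUnion id) = k + r := by
  have hpos : 0 < (k + r) * k.ascFactorial r := by
    rw [add_mul_ascFactorial]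
    exact Nat.mul_pos (r + 1).factorial_pos (hne.card_pos.trans_le hcard)
  refine (Nat.le_of_mul_le_mul_right ?_ (pos_of_mul_pos_right hpos (Nat.zero_le _))).antisymm
    (add_le_card_biUnion h𝒜 hne hk)
  calc #(𝒜.biUnion id) * k.ascFactorial r
      ≤ (r + 1).factorial * #𝒜 := card_biUnion_mul_ascFactorial_le h𝒜 hk
    _ ≤ (r + 1).factorial * (k + r).choose (r + 1) := Nat.mul_le_mul_left _ hcard
    _ = (k + r) * k.ascFactorial r := (add_mul_ascFactorial k r).symm

theorem eq_powersetCard_of_card_le_choose (h𝒜 : (𝒜 : Set (Finset α)).Sized (r + 1))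
    (hne : 𝒜.Nonempty) (hk : ∀ s ∈ ∂ 𝒜, k ≤ #(linkVerts 𝒜 s))
    (hcard : #𝒜 ≤ (k + r).choose (r + 1)) : 𝒜 = (𝒜.biUnion id).powersetCard (r + 1) := by
  refine eq_of_subset_of_card_le
    (fun t ht => mem_powersetCard.2 ⟨subset_biUnion_of_mem id ht, h𝒜 ht⟩) ?_
  rw [card_powersetCard, card_biUnion_eq_of_card_le_choose h𝒜 hne hk hcard]
  exact choose_le_card h𝒜 hne hk

lemma linkVerts_powersetCard {V : Finset α} (hs : s ∈ V.powersetCard r) :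
    linkVerts (V.powersetCard (r + 1)) s = V \ s := by
  obtain ⟨hsV, hcard⟩ := mem_powersetCard.1 hs
  ext z
  rw [mem_linkVerts, mem_powersetCard, mem_sdiff, and_comm (a := z ∈ V)]
  refine and_congr_right fun hz => ?_
  simp only [insert_subset_iff, hsV, and_true, card_insert_of_notMem hz, hcard]

end SetFamilies

section SmallestPositiveEigenvalue

open scoped MatrixOrder

variable {m : Type*} [Fintype m] {M : Matrix m m ℝ}

lemma lambdaMinPos_le {μ : ℝ} (hμ : 0 < μ) {v : m → ℝ} (hv : v ≠ 0) (hMv : M *ᵥ v = μ • v) :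
    lambdaMinPos M ≤ μ :=
  csInf_le ⟨0, fun _ hx => hx.1.le⟩ ⟨hμ, v, hv, hMv⟩

lemma lambdaMinPos_smul_le_mul_self (hM : M.PosSemidef) : lambdaMinPos M • M ≤ M * M := by
  classical
  have hsa : IsSelfAdjoint M := hM.1
  have hspec : ∀ μ ∈ spectrum ℝ M, lambdaMinPos M * μ ≤ μ * μ := by
    rw [hM.1.spectrum_real_eq_range_eigenvalues]
    rintro _ ⟨i, rfl⟩
    rcases (hM.eigenvalues_nonneg i).eq_or_lt with hi | hi
    · rw [← hi, mul_zero, mul_zero]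
    · refine mul_le_mul_of_nonneg_right
        (lambdaMinPos_le hi ?_ (hM.1.mulVec_eigenvectorBasis i)) hi.le
      exact (WithLp.ofLp_eq_zero 2).ne.2 (hM.1.eigenvectorBasis.orthonormal.ne_zero i)
  calc lambdaMinPos M • M = cfc (fun μ : ℝ => lambdaMinPos M * μ) M := by
        rw [cfc_const_mul_id _ M]
    _ ≤ cfc (fun μ : ℝ => μ * μ) M := cfc_mono hspec
    _ = M * M := by rw [cfc_mul _ _ M, cfc_id' ℝ M]

lemma lambdaMinPos_mul_diag_le (hM : M.PosSemidef) (i : m) :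
    lambdaMinPos M * M i i ≤ ∑ j, M i j ^ 2 := by
  have hdiag : 0 ≤ (M * M - lambdaMinPos M • M) i i :=
    (Matrix.le_iff.1 (lambdaMinPos_smul_le_mul_self hM)).diag_nonneg
  have hsq : (M * M) i i = ∑ j, M i j ^ 2 := by
    rw [Matrix.mul_apply]
    exact Fintype.sum_congr _ _ fun j => by rw [← hM.1.apply i j, star_trivial, sq]
  rw [← hsq]
  simpa using hdiag

lemma lambdaMinPos_eq_of_forall_eq (hM : M.PosSemidef) (hM0 : M ≠ 0) {c : ℝ}
    (hc : ∀ μ : ℝ, μ ≠ 0 → ∀ v : m → ℝ, v ≠ 0 → M *ᵥ v = μ • v → μ = c) :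
    lambdaMinPos M = c := by
  obtain ⟨v, μ, hμ, hv, hMv⟩ := hM.1.exists_eigenvector_of_ne_zero hM0
  have hpos : 0 < μ := by
    have hvv : 0 < v ⬝ᵥ v := by simpa using dotProduct_star_self_pos_iff.2 hv
    have hquad : 0 ≤ v ⬝ᵥ M *ᵥ v := by simpa using hM.dotProduct_mulVec_nonneg v
    rw [hMv, dotProduct_smul, smul_eq_mul] at hquad
    exact (nonneg_of_mul_nonneg_left hquad hvv).lt_of_ne' hμ
  have hset : {ν : ℝ | 0 < ν ∧ ∃ w : m → ℝ, w ≠ 0 ∧ M *ᵥ w = ν • w} = {c} := by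
    refine Set.eq_singleton_iff_nonempty_unique_mem.2 ⟨⟨μ, hpos, v, hv, hMv⟩, ?_⟩
    rintro ν ⟨hν, w, hw, hMw⟩
    exact hc ν hν.ne' w hw hMw
  rw [lambdaMinPos, hset, csInf_singleton]

end SmallestPositiveEigenvalue

section UpLaplacian

variable {F : Finset (Finset ℕ)} {T e f : Finset ℕ}

lemma IsTriFam.sized (hF : IsTriFam F) : (F : Set (Finset ℕ)).Sized 3 := fun T hT => hF.2 T hT

lemma mem_edgesOf : e ∈ edgesOf F ↔ ∃ T ∈ F, e ⊆ T ∧ #e = 2 := by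
  simp only [edgesOf, mem_biUnion, mem_powersetCard]

lemma card_of_mem_edgesOf (he : e ∈ edgesOf F) : #e = 2 :=
  let ⟨_, _, _, hcard⟩ := mem_edgesOf.1 he
  hcard

lemma edgesOf_eq_shadow (hF : (F : Set (Finset ℕ)).Sized 3) : edgesOf F = ∂ F := by
  ext e
  rw [mem_edgesOf, mem_shadow_iff_exists_mem_card_add_one]
  refine exists_congr fun T => and_congr_right fun hT => and_congr_right fun _ => ?_
  rw [hF hT]
  omega

/-- The up Laplacian `δ₁ᵀ δ₁` of a triangle family, whose smallest positive eigenvalue is `lam`. -/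
noncomputable def upLaplacian (F : Finset (Finset ℕ)) :
    Matrix {e // e ∈ edgesOf F} {e // e ∈ edgesOf F} ℝ :=
  (delta1 F)ᵀ * delta1 F

lemma posSemidef_upLaplacian : (upLaplacian F).PosSemidef := by
  simpa only [upLaplacian, conjTranspose_eq_transpose_of_trivial] using
    posSemidef_conjTranspose_mul_self (delta1 F)

lemma upLaplacian_apply (e f : {e // e ∈ edgesOf F}) :
    upLaplacian F e f = ∑ T ∈ F, triSign T e * triSign T f :=
  sum_coe_sort F fun T => triSign T e * triSign T f

lemma triSign_eq_zero (h : ¬e ⊆ T) : triSign T e = 0 := if_neg fun h' => h h'.1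

lemma triSign_sq (hT : #T = 3) (he : #e = 2) (heT : e ⊆ T) : triSign T e ^ 2 = 1 := by
  rw [triSign, if_pos ⟨heT, he, hT⟩]
  split_ifs <;> norm_num

lemma upLaplacian_apply_self (hF : (F : Set (Finset ℕ)).Sized 3) (e : {e // e ∈ edgesOf F}) :
    upLaplacian F e e = #{T ∈ F | e.1 ⊆ T} := by
  rw [upLaplacian_apply, natCast_card_filter]
  refine sum_congr rfl fun T hT => ?_
  split_ifs with heT
  · rw [← sq, triSign_sq (hF hT) (card_of_mem_edgesOf e.2) heT]
  · rw [triSign_eq_zero heT, mul_zero]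

lemma card_filter_superset_pos (he : e ∈ edgesOf F) : 0 < #{T ∈ F | e ⊆ T} :=
  let ⟨T, hT, heT, _⟩ := mem_edgesOf.1 he
  card_pos.2 ⟨T, mem_filter.2 ⟨hT, heT⟩⟩

lemma upLaplacian_ne_zero (hF : (F : Set (Finset ℕ)).Sized 3) (hne : F.Nonempty) :
    upLaplacian F ≠ 0 := by
  obtain ⟨T, hT⟩ := hne
  obtain ⟨e, heT, he⟩ := exists_subset_card_eq (by rw [hF hT]; omega : 2 ≤ #T)
  have heF : e ∈ edgesOf F := mem_edgesOf.2 ⟨T, hT, heT, he⟩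
  intro h
  have hself := upLaplacian_apply_self hF ⟨e, heF⟩
  rw [h, Matrix.zero_apply] at hself
  exact (card_filter_superset_pos heF).ne (mod_cast hself)

lemma card_filter_superset_pair_le_one (hF : (F : Set (Finset ℕ)).Sized 3) (he : #e = 2)
    (hf : #f = 2) (hef : e ≠ f) : #{T ∈ F | e ⊆ T ∧ f ⊆ T} ≤ 1 := by
  have hunion : 3 ≤ #(e ∪ f) := by
    by_contra! h
    have he' : e = e ∪ f := eq_of_subset_of_card_le subset_union_left (by omega)
    have hf' : f = e ∪ f := eq_of_subset_of_card_le subset_union_right (by omega)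
    exact hef (he'.trans hf'.symm)
  have hmem : ∀ T ∈ F.filter (fun T => e ⊆ T ∧ f ⊆ T), T = e ∪ f := fun T hT => by
    obtain ⟨hTF, heT, hfT⟩ := mem_filter.1 hT
    exact (eq_of_subset_of_card_le (union_subset heT hfT) ((hF hTF).trans_le hunion)).symm
  exact card_le_one.2 fun A hA B hB => (hmem A hA).trans (hmem B hB).symm

lemma upLaplacian_apply_sq_le (hF : (F : Set (Finset ℕ)).Sized 3) {e f : {e // e ∈ edgesOf F}}
    (hef : e ≠ f) : upLaplacian F e f ^ 2 ≤ #{T ∈ F | e.1 ⊆ T ∧ f.1 ⊆ T} := by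
  have he := card_of_mem_edgesOf e.2
  have hf := card_of_mem_edgesOf f.2
  set C := {T ∈ F | e.1 ⊆ T ∧ f.1 ⊆ T}
  have hC1 : (#C : ℝ) ≤ 1 := by
    exact_mod_cast card_filter_superset_pair_le_one hF he hf (Subtype.coe_ne_coe.2 hef)
  have hsupp : ∑ T ∈ C, triSign T e * triSign T f = ∑ T ∈ F, triSign T e * triSign T f := by
    refine sum_filter_of_ne fun T _ hne => ⟨?_, ?_⟩ <;> by_contra h
    · exact hne (by rw [triSign_eq_zero h, zero_mul])
    · exact hne (by rw [triSign_eq_zero h, mul_zero])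
  calc upLaplacian F e f ^ 2 = (∑ T ∈ C, triSign T e * triSign T f) ^ 2 := by
        rw [upLaplacian_apply, hsupp]
    _ ≤ #C * ∑ T ∈ C, (triSign T e * triSign T f) ^ 2 := sq_sum_le_card_mul_sum_sq
    _ = #C * ∑ T ∈ C, 1 := by
        congr 1
        refine sum_congr rfl fun T hT => ?_
        obtain ⟨hTF, heT, hfT⟩ := mem_filter.1 hT
        rw [mul_pow, triSign_sq (hF hTF) he heT, triSign_sq (hF hTF) hf hfT, one_mul]
    _ = #C * #C := by rw [sum_const, nsmul_one]
    _ ≤ #C := mul_le_of_le_one_right (Nat.cast_nonneg _) hC1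

lemma sum_upLaplacian_apply_sq_le (hF : (F : Set (Finset ℕ)).Sized 3) (e : {e // e ∈ edgesOf F}) :
    ∑ f, upLaplacian F e f ^ 2 ≤ (#{T ∈ F | e.1 ⊆ T} + 2) * #{T ∈ F | e.1 ⊆ T} := by
  set D := {T ∈ F | e.1 ⊆ T} with hD
  have hcount : #D + ∑ f ∈ univ.erase e, #{T ∈ D | f.1 ⊆ T} = 3 * #D := by
    have hself : {T ∈ D | e.1 ⊆ T} = D := by rw [hD, filter_filter]; simp only [and_self]
    rw [← sum_shadow_card_filter_superset hF (filter_subset _ F), ← edgesOf_eq_shadow hF,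
      ← sum_coe_sort (edgesOf F), ← add_sum_erase univ _ (mem_univ e), hself]
  have hoff : ∀ f ∈ univ.erase e, upLaplacian F e f ^ 2 ≤ #{T ∈ D | f.1 ⊆ T} := fun f hf => by
    rw [hD, filter_filter]
    exact upLaplacian_apply_sq_le hF (ne_of_mem_erase hf).symm
  calc ∑ f, upLaplacian F e f ^ 2
      = #D ^ 2 + ∑ f ∈ univ.erase e, upLaplacian F e f ^ 2 := by
        rw [← add_sum_erase univ _ (mem_univ e), upLaplacian_apply_self hF]
    _ ≤ #D ^ 2 + ∑ f ∈ univ.erase e, (#{T ∈ D | f.1 ⊆ T} : ℝ) := by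
        gcongr with f hf
        exact hoff f hf
    _ = (#D + 2) * #D := by
        have hcast := congrArg (Nat.cast : ℕ → ℝ) hcount
        push_cast at hcast
        linear_combination hcast

lemma lam_le_card_linkVerts_add_two (hF : (F : Set (Finset ℕ)).Sized 3) (he : e ∈ edgesOf F) :
    lam F ≤ #(linkVerts F e) + 2 := by
  have hFe : (F : Set (Finset ℕ)).Sized (#e + 1) := by rwa [card_of_mem_edgesOf he]
  rw [← card_filter_superset_eq_card_linkVerts hFe]
  have hpos : (0 : ℝ) < #{T ∈ F | e ⊆ T} := mod_cast card_filter_superset_pos he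
  have hdiag := lambdaMinPos_mul_diag_le posSemidef_upLaplacian (⟨e, he⟩ : {e // e ∈ edgesOf F})
  rw [upLaplacian_apply_self hF] at hdiag
  exact le_of_mul_le_mul_right (hdiag.trans (sum_upLaplacian_apply_sq_le hF ⟨e, he⟩)) hpos

end UpLaplacian

section AlternatingCochains

/-- The coboundary of a `1`-cochain `a`, evaluated on the cyclically oriented triangle
`x → y → z → x`; this is the usual `a x y - a x z + a y z` when `a` is alternating. -/
def coboundary {ι R : Type*} [Add R] (a : ι → ι → R) (x y z : ι) : R := a x y + a y z + a z x

variable {ι R : Type*} [CommRing R] {V : Finset ι} {a : ι → ι → R}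

lemma sum_coboundary_eq (ha : ∀ x y, a y x = -a x y) (x y : ι) :
    ∑ z ∈ V, coboundary a z x y = #V * a x y + ∑ z ∈ V, a y z - ∑ z ∈ V, a x z := by
  simp only [coboundary, sum_add_distrib, sum_const, nsmul_eq_mul, ha x, sum_neg_distrib]
  ring

variable [IsDomain R] [CharZero R]

lemma sum_sum_eq_zero_of_alternating (ha : ∀ x y, a y x = -a x y) :
    ∑ x ∈ V, ∑ y ∈ V, a x y = 0 := by
  refine self_eq_neg.1 ?_
  calc ∑ x ∈ V, ∑ y ∈ V, a x y = ∑ y ∈ V, ∑ x ∈ V, a x y := sum_comm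
    _ = -∑ y ∈ V, ∑ x ∈ V, a y x := by simp only [← sum_neg_distrib, ← ha]

lemma sum_sdiff_pair_coboundary [DecidableEq ι] (ha : ∀ x y, a y x = -a x y) (x y : ι) :
    ∑ z ∈ V \ {x, y}, coboundary a z x y = ∑ z ∈ V, coboundary a z x y := by
  have hself : ∀ x, a x x = 0 := fun x => self_eq_neg.1 (ha x x)
  refine sum_subset sdiff_subset fun z hzV hz => ?_
  have hz : z ∈ ({x, y} : Finset ι) := by simpa only [mem_sdiff, hzV, true_and, not_not] using hz
  rcases mem_insert.1 hz with rfl | hz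
  · rw [coboundary, hself, ha z y]; ring
  · rw [mem_singleton.1 hz, coboundary, hself, ha x y]; ring

lemma eq_card_of_sum_coboundary_eq_mul [DecidableEq ι] (ha : ∀ x y, a y x = -a x y) {μ : R}
    (hμ : μ ≠ 0) (hne : ∃ x ∈ V, ∃ y ∈ V, a x y ≠ 0)
    (hsum : ∀ x ∈ V, ∀ y ∈ V, x ≠ y → ∑ z ∈ V \ {x, y}, coboundary a z x y = μ * a x y) :
    μ = #V := by
  have heq : ∀ x ∈ V, ∀ y ∈ V, #V * a x y + ∑ z ∈ V, a y z - ∑ z ∈ V, a x z = μ * a x y := by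
    intro x hx y hy
    rcases eq_or_ne x y with rfl | hxy
    · rw [self_eq_neg.1 (ha x x)]; ring
    · rw [← sum_coboundary_eq ha, ← sum_sdiff_pair_coboundary ha, hsum x hx y hy hxy]
  have hdiv : ∀ x ∈ V, ∑ z ∈ V, a x z = 0 := fun x hx => by
    have h := sum_congr rfl (heq x hx)
    simp only [sum_sub_distrib, sum_add_distrib, ← mul_sum, sum_const, nsmul_eq_mul,
      sum_sum_eq_zero_of_alternating ha, add_zero, sub_self] at h
    exact (mul_eq_zero.1 h.symm).resolve_left hμ
  obtain ⟨x, hx, y, hy, hxy⟩ := hne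
  have h := heq x hx y hy
  rw [hdiv x hx, hdiv y hy, add_zero, sub_zero] at h
  exact mul_right_cancel₀ hxy h.symm

end AlternatingCochains

section Orientation

variable {x y z : ℕ}

/-- The sign `1` or `-1` of the ordered pair `(x, y)` according as `x < y` or `y < x`,
and `0` when `x = y`. -/
noncomputable def pairSign (x y : ℕ) : ℝ := Real.sign (y - x)

lemma pairSign_swap (x y : ℕ) : pairSign y x = -pairSign x y := by
  rw [pairSign, pairSign, ← Real.sign_neg, neg_sub]

lemma pairSign_mul_self (hxy : x ≠ y) : pairSign x y * pairSign x y = 1 := by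
  have hne : (y - x : ℝ) ≠ 0 := sub_ne_zero.2 (Nat.cast_injective.ne hxy.symm)
  rcases Real.sign_apply_eq_of_ne_zero _ hne with h | h <;> rw [pairSign, h] <;> norm_num

/-- The sign of the permutation sorting the distinct numbers `(x, y, z)`; the minus sign accounts
for the one descent `z → x` of the cycle `x → y → z → x` when `x < y < z`. -/
noncomputable def tripleSign (x y z : ℕ) : ℝ := -(pairSign x y * pairSign y z * pairSign z x)

lemma tripleSign_rotate (x y z : ℕ) : tripleSign y z x = tripleSign x y z := by
  rw [tripleSign, tripleSign]; ring

lemma tripleSign_mul_self (hxy : x ≠ y) (hyz : y ≠ z) (hzx : z ≠ x) :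
    tripleSign x y z * tripleSign x y z = 1 := by
  rw [tripleSign, neg_mul_neg, mul_mul_mul_comm, mul_mul_mul_comm (pairSign x y),
    pairSign_mul_self hxy, pairSign_mul_self hyz, pairSign_mul_self hzx, one_mul, one_mul]

lemma triSign_triple_pair (hxy : x ≠ y) (hyz : y ≠ z) (hzx : z ≠ x) :
    triSign {x, y, z} {y, z} = tripleSign x y z * pairSign y z := by
  have hsdiff : ({x, y, z} : Finset ℕ) \ {y, z} = {x} :=
    insert_sdiff_cancel (by simp [hxy, hzx.symm])
  have hmax : ({x} : Finset ℕ).max = ({x, y, z} : Finset ℕ).max ↔ y < x ∧ z < x := by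
    simp only [max_insert, max_singleton, ← WithBot.coe_max, WithBot.coe_inj]
    omega
  have hmin : ({x} : Finset ℕ).min = ({x, y, z} : Finset ℕ).min ↔ x < y ∧ x < z := by
    simp only [min_insert, min_singleton, ← WithTop.coe_min, WithTop.coe_inj]
    omega
  have hcond : ({y, z} : Finset ℕ) ⊆ {x, y, z} ∧ #{y, z} = 2 ∧ #{x, y, z} = 3 :=
    ⟨subset_insert x _, card_pair hyz, card_eq_three.2 ⟨x, y, z, hxy, hzx.symm, hyz, rfl⟩⟩
  rw [triSign, if_pos hcond, hsdiff]
  simp only [hmax, hmin, tripleSign, pairSign, Real.sign, sub_neg, sub_pos, Nat.cast_lt]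
  split_ifs <;> first | omega | norm_num

lemma sum_powersetCard_two_triple {α M : Type*} [DecidableEq α] [AddCommMonoid M] {x y z : α}
    (hxy : x ≠ y) (hyz : y ≠ z) (hzx : z ≠ x) (g : Finset α → M) :
    ∑ e ∈ ({x, y, z} : Finset α).powersetCard 2, g e = g {x, y} + (g {y, z} + g {z, x}) := by
  have hpairs : ({x, y} : Finset α) ≠ {y, z} ∧ ({x, y} : Finset α) ≠ {z, x} ∧
      ({y, z} : Finset α) ≠ {z, x} := by
    refine ⟨fun h => ?_, fun h => ?_, fun h => ?_⟩
    · grind [mem_insert_self x {y}]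
    · grind [mem_insert_self z {x}]
    · grind [mem_insert_self y {z}]
  obtain ⟨h₁, h₂, h₃⟩ := hpairs
  have hsub : {{x, y}, {y, z}, {z, x}} ⊆ ({x, y, z} : Finset α).powersetCard 2 := by
    simp [insert_subset_iff, mem_powersetCard, card_pair hxy, card_pair hyz, card_pair hzx]
  have hcard : #(({x, y, z} : Finset α).powersetCard 2) = 3 := by
    rw [card_powersetCard, card_eq_three.2 ⟨x, y, z, hxy, hzx.symm, hyz, rfl⟩]; rfl
  have hcard' : #({{x, y}, {y, z}, {z, x}} : Finset (Finset α)) = 3 :=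
    card_eq_three.2 ⟨_, _, _, h₁, h₂, h₃, rfl⟩
  rw [← eq_of_subset_of_card_le hsub (by rw [hcard, hcard']), sum_insert (by simp [h₁, h₂]),
    sum_pair h₃]

end Orientation

section UpLaplacianAction

variable {F : Finset (Finset ℕ)} {x y z : ℕ}

/-- The alternating `1`-cochain on ordered pairs represented by a function `v` on the edges, each
edge being oriented from its smaller to its larger endpoint. -/
noncomputable def edgeCochain (v : {e // e ∈ edgesOf F} → ℝ) (x y : ℕ) : ℝ :=
  pairSign x y * if h : {x, y} ∈ edgesOf F then v ⟨{x, y}, h⟩ else 0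

lemma edgeCochain_swap (v : {e // e ∈ edgesOf F} → ℝ) (x y : ℕ) :
    edgeCochain v y x = -edgeCochain v x y := by
  simp only [edgeCochain, pairSign_swap x y, pair_comm y x, neg_mul]

lemma pairSign_mul_edgeCochain (v : {e // e ∈ edgesOf F} → ℝ) (hxy : x ≠ y)
    (h : {x, y} ∈ edgesOf F) : pairSign x y * edgeCochain v x y = v ⟨{x, y}, h⟩ := by
  rw [edgeCochain, dif_pos h, ← mul_assoc, pairSign_mul_self hxy, one_mul]

lemma sum_triSign_mul (v : {e // e ∈ edgesOf F} → ℝ) (hxy : x ≠ y) (hyz : y ≠ z) (hzx : z ≠ x)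
    (hT : {x, y, z} ∈ F) :
    ∑ e : {e // e ∈ edgesOf F}, triSign {x, y, z} e * v e =
      tripleSign x y z * coboundary (edgeCochain v) x y z := by
  set w : Finset ℕ → ℝ := fun e => if h : e ∈ edgesOf F then v ⟨e, h⟩ else 0 with hw
  have hsub : ({x, y, z} : Finset ℕ).powersetCard 2 ⊆ edgesOf F := subset_biUnion_of_mem _ hT
  have hxy_sign := triSign_triple_pair hzx hxy hyz
  have hyz_sign := triSign_triple_pair hxy hyz hzx
  have hzx_sign := triSign_triple_pair hyz hzx hxy
  have h₁ : ({z, x, y} : Finset ℕ) = {x, y, z} := by grind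
  have h₂ : ({y, z, x} : Finset ℕ) = {x, y, z} := by grind
  rw [h₁, ← tripleSign_rotate] at hxy_sign
  rw [h₂, tripleSign_rotate] at hzx_sign
  calc ∑ e : {e // e ∈ edgesOf F}, triSign {x, y, z} e * v e
      = ∑ e : {e // e ∈ edgesOf F}, triSign {x, y, z} e * w e :=
        Fintype.sum_congr _ _ fun e => by simp only [hw, e.2, dif_pos]
    _ = ∑ e ∈ edgesOf F, triSign {x, y, z} e * w e :=
        sum_coe_sort (edgesOf F) fun e => triSign {x, y, z} e * w e
    _ = ∑ e ∈ ({x, y, z} : Finset ℕ).powersetCard 2, triSign {x, y, z} e * w e := by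
        refine (sum_subset hsub fun e he he' => ?_).symm
        rw [triSign_eq_zero fun h => he' (mem_powersetCard.2 ⟨h, card_of_mem_edgesOf he⟩), zero_mul]
    _ = tripleSign x y z * coboundary (edgeCochain v) x y z := by
        rw [sum_powersetCard_two_triple hxy hyz hzx, hxy_sign, hyz_sign, hzx_sign]
        simp only [coboundary, edgeCochain, hw]
        ring

lemma upLaplacian_mulVec (v : {e // e ∈ edgesOf F} → ℝ) (e : {e // e ∈ edgesOf F}) :
    (upLaplacian F *ᵥ v) e =
      ∑ T ∈ F with e.1 ⊆ T, triSign T e * ∑ f : {f // f ∈ edgesOf F}, triSign T f * v f := by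
  have hsupp : ∀ T ∈ F, triSign T e * ∑ f : {f // f ∈ edgesOf F}, triSign T f * v f ≠ 0 →
      e.1 ⊆ T := fun T _ hne => by
    by_contra h
    exact hne (by rw [triSign_eq_zero h, zero_mul])
  rw [sum_filter_of_ne hsupp, upLaplacian, ← mulVec_mulVec]
  exact sum_coe_sort F fun T => triSign T e * ∑ f : {f // f ∈ edgesOf F}, triSign T f * v f

lemma upLaplacian_mulVec_pair (hF : (F : Set (Finset ℕ)).Sized 3) (v : {e // e ∈ edgesOf F} → ℝ)
    (hxy : x ≠ y) (h : {x, y} ∈ edgesOf F) :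
    (upLaplacian F *ᵥ v) ⟨{x, y}, h⟩ =
      pairSign x y * ∑ z ∈ linkVerts F {x, y}, coboundary (edgeCochain v) z x y := by
  have hFe : (F : Set (Finset ℕ)).Sized (#{x, y} + 1) := by rwa [card_pair hxy]
  rw [upLaplacian_mulVec, sum_filter_superset_eq_sum_linkVerts hFe, mul_sum]
  refine sum_congr rfl fun z hz => ?_
  obtain ⟨hz, hzF⟩ := mem_linkVerts.1 hz
  rw [mem_insert, mem_singleton, not_or] at hz
  have hyz : y ≠ z := Ne.symm hz.2
  rw [triSign_triple_pair hz.1 hxy hyz, sum_triSign_mul v hz.1 hxy hyz hzF]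
  linear_combination (pairSign x y * coboundary (edgeCochain v) z x y) *
    tripleSign_mul_self hz.1 hxy hyz

end UpLaplacianAction

section CompleteFamily

variable {V : Finset ℕ}

lemma edgesOf_powersetCard_three (hV : 3 ≤ #V) : edgesOf (V.powersetCard 3) = V.powersetCard 2 := by
  ext e
  simp only [mem_edgesOf, mem_powersetCard]
  constructor
  · rintro ⟨T, ⟨hTV, -⟩, heT, he⟩
    exact ⟨heT.trans hTV, he⟩
  · rintro ⟨heV, he⟩
    obtain ⟨T, heT, hTV, hT⟩ := exists_subsuperset_card_eq heV (by omega) hV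
    exact ⟨T, ⟨hTV, hT⟩, heT, he⟩

lemma eigenvalue_upLaplacian_powersetCard_three (hV : 3 ≤ #V) {μ : ℝ} (hμ : μ ≠ 0)
    {v : {e // e ∈ edgesOf (V.powersetCard 3)} → ℝ} (hv : v ≠ 0)
    (hev : upLaplacian (V.powersetCard 3) *ᵥ v = μ • v) : μ = #V := by
  have hedges := edgesOf_powersetCard_three hV
  refine eq_card_of_sum_coboundary_eq_mul (edgeCochain_swap v) hμ ?_ fun x hx y hy hxy => ?_
  · obtain ⟨⟨e, he⟩, hve⟩ := Function.ne_iff.1 hv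
    obtain ⟨x, y, hxy, rfl⟩ := card_eq_two.1 (card_of_mem_edgesOf he)
    have hxyV := (mem_powersetCard.1 (hedges ▸ he)).1
    refine ⟨x, hxyV (by simp), y, hxyV (by simp), fun h => hve ?_⟩
    rw [← pairSign_mul_edgeCochain v hxy he, h, mul_zero, Pi.zero_apply]
  · have hpair : {x, y} ∈ V.powersetCard 2 :=
      mem_powersetCard.2 ⟨by simp [insert_subset_iff, hx, hy], card_pair hxy⟩
    have he : {x, y} ∈ edgesOf (V.powersetCard 3) := by rwa [hedges]
    have h := congrFun hev ⟨{x, y}, he⟩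
    rw [upLaplacian_mulVec_pair (Set.sized_powersetCard _ _) v hxy he, linkVerts_powersetCard hpair,
      Pi.smul_apply, smul_eq_mul, ← pairSign_mul_edgeCochain v hxy he, mul_left_comm] at h
    exact mul_left_cancel₀ (left_ne_zero_of_mul_eq_one (pairSign_mul_self hxy)) h

lemma lam_powersetCard_three (hV : 3 ≤ #V) : lam (V.powersetCard 3) = #V :=
  lambdaMinPos_eq_of_forall_eq posSemidef_upLaplacian
    (upLaplacian_ne_zero (Set.sized_powersetCard V 3) (powersetCard_nonempty.2 hV))
    fun _ hμ _ hv hev => eigenvalue_upLaplacian_powersetCard_three hV hμ hv hev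

end CompleteFamily

theorem stmt6_general (n : ℕ) (F : Finset (Finset ℕ)) (hF : IsTriFam F)
    (hcard : F.card ≤ n.choose 3) (hlam : (n : ℝ) - 1 < lam F) :
    lam F = (n : ℝ) ∧ (vertsOf F).card = n ∧ F = (vertsOf F).powersetCard 3 ∧
    (∀ x ∈ vertsOf F, ∀ y ∈ vertsOf F, x ≠ y → ({x, y} : Finset ℕ) ∈ edgesOf F) := by
  have hn : 3 ≤ n := Nat.choose_ne_zero_iff.1 (hF.1.card_pos.trans_le hcard).ne'
  obtain ⟨k, rfl⟩ := Nat.exists_eq_add_of_le' (by omega : 2 ≤ n)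
  have hcodeg : ∀ e ∈ ∂ F, k ≤ #(linkVerts F e) := fun e he => by
    have hle := lam_le_card_linkVerts_add_two hF.sized (edgesOf_eq_shadow hF.sized ▸ he)
    have hlt : (k : ℝ) < #(linkVerts F e) + 1 := by push_cast at hlam; linarith
    exact Nat.lt_succ_iff.1 (mod_cast hlt)
  have hverts : #(vertsOf F) = k + 2 :=
    card_biUnion_eq_of_card_le_choose hF.sized hF.1 hcodeg hcard
  have hfull : F = (vertsOf F).powersetCard 3 :=
    eq_powersetCard_of_card_le_choose hF.sized hF.1 hcodeg hcard
  have hV : 3 ≤ #(vertsOf F) := hverts ▸ hn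
  refine ⟨?_, hverts, hfull, fun x hx y hy hxy => ?_⟩
  · calc lam F = lam ((vertsOf F).powersetCard 3) := congrArg lam hfull
      _ = (k + 2 : ℕ) := by rw [lam_powersetCard_three hV, hverts]
  · rw [congrArg edgesOf hfull, edgesOf_powersetCard_three hV, mem_powersetCard]
    exact ⟨by simp [insert_subset_iff, hx, hy], card_pair hxy⟩

/-- Rigidity at the clique threshold: if `n ≥ 3`, `|𝒯| = C(n,3)` and `λ(𝒯) > n - 1`,
then `λ(𝒯) = n`, the support graph is a complete graph on exactly `n` vertices, and
`𝒯` consists of all 3-element subsets of the vertex set of `Γ₀(𝒯)`. -/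
theorem stmt6 (n : ℕ) (hn : 3 ≤ n) (F : Finset (Finset ℕ)) (hF : IsTriFam F)
    (hcard : F.card = n.choose 3) (hlam : (n : ℝ) - 1 < lam F) :
    lam F = (n : ℝ) ∧ (vertsOf F).card = n ∧ F = (vertsOf F).powersetCard 3 ∧
    (∀ x ∈ vertsOf F, ∀ y ∈ vertsOf F, x ≠ y → ({x, y} : Finset ℕ) ∈ edgesOf F) :=
  stmt6_general n F hF hcard.le hlam
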